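/- Suppose A is a local differential operator on Loc(E) such that χ(A ∘ d/dx^i) = 0 for all 1 ≤ i ≤ N. Then the diagonal operator on the horizontal complex defined by χ(A), i.e. f (dx)^ε ↦ (χ(A)f)(dx)^ε on each Ω^{k,0}, commutes with the horizontal differential d_H. -/

import Mathlib

/-!
Write `x_j` also for multiplication by the `j`-th base coordinate and `ad_{x_j} A = A x_j - x_j A`.
The proof rests on a formula for the characteristic which does not refer to a presentation of `A`:

  `χ(A) = Σ_K ((-1)^{|K|} / K!) (d/dx)^K ∘ ad_x^K A`,

the right-hand side being called `Psi`. It is a finite sum on each local function. Since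
`ad_{x_j} (d/dx^i) = δ_{ij}`, one has
`ad_x^K (A ∘ d/dx^i) = ad_x^K A ∘ d/dx^i + K_i ad_x^{K - e_i} A` (`adK_mul_D`), and summing over `K`
gives `Ψ(A ∘ d/dx^i) = Ψ(A) ∘ d/dx^i - d/dx^i ∘ Ψ(A)` (`Psi_mul_D`).

This identity is used twice. Applied inductively to the operators `a (d/dx)^I`, together with
`Ψ(a) = a`, it gives `Ψ(a (d/dx)^I) = (-1)^{|I|} (d/dx)^I a` (`Psi_mono`); as the vertical
derivatives commute with the `x_j`, this yields `Ψ(A) = χ(A)` (`realizeP_chiData`). In particular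
`χ(A)` depends only on the operator `A`, so the hypothesis, which concerns some presentation of
`A ∘ d/dx^i`, says that `Ψ(A ∘ d/dx^i) = 0`. Applied to `A` itself, the identity then says that
`χ(A)` commutes with `d/dx^i` (`Psi_comm`), hence with `d_H`.

The analytic input is that the total derivatives are commuting derivations of the algebra of local
functions and that the `∂/∂u_J` commute; commutativity follows in both cases from the symmetry of
second derivatives along affine vector fields (`dir_dir`).
-/

open scoped BigOperators

namespace JetBundle

/-- Multi-indices `J = (j_1,…,j_N)`. -/
abbrev MI (N : ℕ) := Fin N → ℕ

/-- A point of the infinite jet bundle `J^∞E`, with coordinates `(x^i, u_J)`. -/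
abbrev JetPt (N : ℕ) := (Fin N → ℝ) × (MI N → ℝ)

/-- Real-valued functions on the infinite jet bundle. -/
abbrev Fn (N : ℕ) := JetPt N → ℝ

/-- Partial derivative with respect to the base coordinate `x^i`. -/
noncomputable def pderivX {N : ℕ} (i : Fin N) (f : Fn N) : Fn N :=
  fun p => deriv (fun t => f (Function.update p.1 i t, p.2)) (p.1 i)

/-- Partial derivative with respect to the jet coordinate `u_J`. -/
noncomputable def pderivU {N : ℕ} (J : MI N) (f : Fn N) : Fn N :=
  fun p => deriv (fun t => f (p.1, Function.update p.2 J t)) (p.2 J)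

/-- `iJ` : the multi-index `J` with its `i`-th entry increased by `1`. -/
def inc {N : ℕ} (i : Fin N) (J : MI N) : MI N := Function.update J i (J i + 1)

/-- The total derivative `d/dx^i = ∂/∂x^i + Σ_J u_{iJ} ∂/∂u_J`. -/
noncomputable def Dtot {N : ℕ} (i : Fin N) (f : Fn N) : Fn N :=
  fun p => pderivX i f p + ∑' J : MI N, p.2 (inc i J) * pderivU J f p

/-- Iterated total derivative `(d/dx)^I`. -/
noncomputable def DPow {N : ℕ} (I : MI N) : Fn N → Fn N :=
  (List.finRange N).foldr (fun i g => (Dtot i)^[I i] ∘ g) id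

/-- Iterated vertical derivative `(∂/∂u)^α` for a finitely supported exponent `α`. -/
noncomputable def UPow {N : ℕ} (α : MI N →₀ ℕ) : Fn N → Fn N :=
  α.support.toList.foldr (fun J g => (pderivU J)^[α J] ∘ g) id

/-- A local function: a smooth function of the base coordinates and
finitely many jet coordinates `u_J`. -/
def IsLocal {N : ℕ} (f : Fn N) : Prop :=
  ∃ (S : Finset (MI N)) (g : ((Fin N → ℝ) × (↥S → ℝ)) → ℝ),
    ContDiff ℝ (⊤ : ℕ∞) g ∧ ∀ p : JetPt N, f p = g (p.1, fun J => p.2 J.1)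

/-- The formal differential degree of an exponent `α`: the maximal `|J|` with `α J ≠ 0`. -/
def degf {N : ℕ} (α : MI N →₀ ℕ) : ℕ := α.support.sup fun J => ∑ i, J i

/-- Index type for the coefficients of an `n`-multilinear local differential operator:
a tuple of multi-indices `(I_1,…,I_n)` and vertical exponents `(α_1,…,α_n)`. -/
abbrev Idx (N n : ℕ) := (Fin n → MI N) × (Fin n → (MI N →₀ ℕ))

/-- Coefficient data of an `n`-multilinear local differential operator. -/
abbrev OpData (N n : ℕ) := Idx N n → Fn N

/-- `n`-multilinear operators on functions on the jet bundle. -/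
abbrev Op (N n : ℕ) := (Fin n → Fn N) → Fn N

/-- An `n`-tuple of local functions. -/
def LocalTuple {N n : ℕ} (f : Fin n → Fn N) : Prop := ∀ j, IsLocal (f j)

/-- Coefficient data is admissible if all coefficients are local functions and, for each `m`,
only finitely many coefficients with `Σ_j deg_f(α_j) ≤ m` are nonzero. -/
def Good {N n : ℕ} (q : OpData N n) : Prop :=
  (∀ Iα, IsLocal (q Iα)) ∧
    ∀ m : ℕ, {Iα : Idx N n | q Iα ≠ 0 ∧ ∑ j, degf (Iα.2 j) ≤ m}.Finite

/-- The (unpolarized) realization of coefficient data: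
`A(f_1,…,f_n) = Σ p_{I,α} Π_j (d/dx)^{I_j} (∂/∂u)^{α_j} f_j`. -/
noncomputable def realizeU {N n : ℕ} (q : OpData N n) (f : Fin n → Fn N) : Fn N :=
  fun pt => ∑' Iα : Idx N n, q Iα pt * ∏ j, DPow (Iα.1 j) (UPow (Iα.2 j) (f j)) pt

/-- The polarized realization of coefficient data: the slot `I_1` records powers of
`d/dy_1 = Σ_j d/dx_j`, i.e. total derivatives applied to the whole product, while for `j ≥ 2`
the slot `I_j` records powers of `d/dy_j = d/dx_j` acting on the `j`-th argument:
`A(f_1,…,f_n) = Σ q_{I;α} (d/dx)^{I_1} [ (∂/∂u)^{α_1}f_1 · Π_{j≥2} (d/dx)^{I_j}(∂/∂u)^{α_j} f_j ]`. -/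
noncomputable def realizeP {N n : ℕ} [NeZero n] (q : OpData N n) (f : Fin n → Fn N) : Fn N :=
  fun pt => ∑' Iα : Idx N n, q Iα pt *
    DPow (Iα.1 0) (fun p => ∏ j,
      if j = (0 : Fin n) then UPow (Iα.2 j) (f j) p
      else DPow (Iα.1 j) (UPow (Iα.2 j) (f j)) p) pt

/-- The characteristic, on polarized coefficient data:
`χ(q)_{(0,I_2,…,I_n);α} := Σ_{I_1} (−1)^{|I_1|} (d/dx)^{I_1} q_{I_1,I_2,…,I_n;α}`. -/
noncomputable def chiData {N n : ℕ} [NeZero n] (q : OpData N n) : OpData N n :=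
  fun Iα =>
    if Iα.1 0 = 0 then
      fun pt => ∑' K : MI N,
        (-1 : ℝ) ^ (∑ i, K i) * DPow K (q (Function.update Iα.1 0 K, Iα.2)) pt
    else 0

/-- `q` is a polarized presentation of the operator `A` (on local functions). -/
def Presents {N n : ℕ} [NeZero n] (q : OpData N n) (A : Op N n) : Prop :=
  ∀ f, LocalTuple f → ∀ pt, A f pt = realizeP q f pt

/-- `A` is an `n`-multilinear local differential operator (unpolarized form). -/
def IsLDO {N n : ℕ} (A : Op N n) : Prop :=
  ∃ q : OpData N n, Good q ∧ ∀ f, LocalTuple f → ∀ pt, A f pt = realizeU q f pt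

/-- `A` is an `n`-multilinear local differential operator, given by a polarized presentation. -/
def IsPLDO {N n : ℕ} [NeZero n] (A : Op N n) : Prop :=
  ∃ q : OpData N n, Good q ∧ Presents q A

/-- `A` is an `n`-multilinear local differential operator with vanishing characteristic. -/
def ChiZero {N n : ℕ} [NeZero n] (A : Op N n) : Prop :=
  ∃ q : OpData N n, Good q ∧ Presents q A ∧
    ∀ f, LocalTuple f → ∀ pt, realizeP (chiData q) f pt = 0

/-- Precomposition `A ∘ d/dx^i_j` with the total derivative acting on the `j`-th argument. -/
noncomputable def precompD {N n : ℕ} (A : Op N n) (i : Fin N) (j : Fin n) : Op N n :=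
  fun f => A (Function.update f j (Dtot i (f j)))

/-- A horizontal form, recorded by its coefficients on the basis
`(dx)^ε = (dx^1)^{ε^1} ∧ ⋯ ∧ (dx^N)^{ε^N}`, `ε : Fin N → Bool`. -/
abbrev Form (N : ℕ) := (Fin N → Bool) → Fn N

/-- The form-degree `|ε|`. -/
def wt {N : ℕ} (ε : Fin N → Bool) : ℕ := ∑ i, if ε i then 1 else 0

/-- The sign exponent: the number of entries of `ε` below `i` which are set. -/
def pos {N : ℕ} (i : Fin N) (ε : Fin N → Bool) : ℕ := ∑ l, if l < i ∧ ε l then 1 else 0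

/-- The horizontal differential `d_H ω = Σ_i dx^i ∧ (d/dx^i) ω`. -/
noncomputable def dH {N : ℕ} (ω : Form N) : Form N :=
  fun δ pt => ∑ i : Fin N,
    if δ i then (-1 : ℝ) ^ pos i δ * Dtot i (ω (Function.update δ i false)) pt else 0

/-- A matrix of operators acting on horizontal forms (linear case). -/
abbrev FormOp (N : ℕ) := (Fin N → Bool) → (Fin N → Bool) → (Fn N → Fn N)

/-- Application of a matrix of operators to a form. -/
noncomputable def applyFO {N : ℕ} (M : FormOp N) (ω : Form N) : Form N :=
  fun δ pt => ∑ ε : Fin N → Bool, M ε δ (ω ε) pt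

/-- A degree element of `DEnd(n)`: a matrix indexed by basis multidegrees of the inputs
`(ε_1,…,ε_n)` and of the output `δ`, with `n`-multilinear operator entries. -/
abbrev DMat (N n : ℕ) := (Fin n → (Fin N → Bool)) → (Fin N → Bool) → Op N n

/-- All matrix entries are local differential operators. -/
def LDOMat {N n : ℕ} [NeZero n] (F : DMat N n) : Prop := ∀ εs δ, IsPLDO (F εs δ)

/-- `F` represents a degree-`k` map of the regraded horizontal complexes
(`Ω_i := Ω^{N−i,0}`): the entry at `(ε⃗, δ)` vanishes unless
`N − wt δ = k + Σ_j (N − wt ε_j)`. -/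
def GradedMat {N n : ℕ} (k : ℤ) (F : DMat N n) : Prop :=
  ∀ εs δ, F εs δ ≠ 0 → (wt δ : ℤ) = (N : ℤ) - k - ∑ j, ((N : ℤ) - (wt (εs j) : ℤ))

/-- The differential `(δf)_s = d_H f_s − (−1)^k f_{s−1} d_H^{⊗n}` of the complex `DEnd_*(n)`,
written out on matrix entries. -/
noncomputable def deltaMat {N n : ℕ} (k : ℤ) (F : DMat N n) : DMat N n :=
  fun εs δ g =>
    (fun pt => ∑ i : Fin N,
      if δ i then (-1 : ℝ) ^ pos i δ * Dtot i (F εs (Function.update δ i false) g) pt else 0)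
    -
    ((-1 : ℝ) ^ k) • (fun pt => ∑ j : Fin n, ∑ i : Fin N,
      if εs j i = false then
        (-1 : ℝ) ^ ((∑ l ∈ Finset.univ.filter fun l => l < j, wt (εs l)) + pos i (εs j)) *
          F (Function.update εs j (Function.update (εs j) i true)) δ
            (Function.update g j (Dtot i (g j))) pt
      else 0)

/-- A matrix of operators vanishes (on local arguments). -/
def MatZeroLoc {N n : ℕ} (F : DMat N n) : Prop :=
  ∀ εs δ g, LocalTuple g → ∀ pt, F εs δ g pt = 0

/-- Two matrices of operators agree (on local arguments). -/
def MatEqLoc {N n : ℕ} (F G : DMat N n) : Prop :=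
  ∀ εs δ g, LocalTuple g → ∀ pt, F εs δ g pt = G εs δ g pt

/-- The projection `B_0 : DEnd_0(n) → LDO(n)`, i.e. the component `f_0` on the identifications
`[(Ω_*)^{⊗n}]_0 ≅ Loc(E)^{⊗n}`, `Ω_0 ≅ Loc(E)`. -/
def B0 {N n : ℕ} (F : DMat N n) : Op N n := F (fun _ _ => true) fun _ => true

/-- A form with coefficients in `LDO(n)`: an element of the operator complex `O^*(n)`. -/
abbrev OForm (N n : ℕ) := (Fin N → Bool) → Op N n

/-- The differential of the operator complex: `d(A (dx)^ε) = Σ_i (d/dx^i ∘ A) dx^i ∧ (dx)^ε`. -/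
noncomputable def dO {N n : ℕ} (ω : OForm N n) : OForm N n :=
  fun δ g pt => ∑ i : Fin N,
    if δ i then (-1 : ℝ) ^ pos i δ * Dtot i (ω (Function.update δ i false) g) pt else 0

/-- An element of `O^*(n)` concentrated in degree `k`. -/
def OGraded {N n : ℕ} (k : ℕ) (ω : OForm N n) : Prop := ∀ δ, ω δ ≠ 0 → wt δ = k

/-- All coefficients are local differential operators. -/
def OLDO {N n : ℕ} [NeZero n] (ω : OForm N n) : Prop := ∀ δ, IsPLDO (ω δ)

/-- An element of `O^*(n)` vanishes on local arguments. -/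
def OZeroLoc {N n : ℕ} (ω : OForm N n) : Prop :=
  ∀ δ g, LocalTuple g → ∀ pt, ω δ g pt = 0

/-- Two elements of `O^*(n)` agree on local arguments. -/
def OEqLoc {N n : ℕ} (ω η : OForm N n) : Prop :=
  ∀ δ g, LocalTuple g → ∀ pt, ω δ g pt = η δ g pt

/-- The Euler operator `E(L dx^1∧⋯∧dx^N) = Σ_I (−1)^{|I|} (d/dx)^I (∂L/∂u_I)`. -/
noncomputable def Euler {N : ℕ} (L : Fn N) : Fn N :=
  fun pt => ∑' I : MI N, (-1 : ℝ) ^ (∑ i, I i) * DPow I (pderivU I L) pt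

/-! ### Multi-indices and monomials -/

/-- The smaller multi-index with `i`-th entry decreased by one (truncated at zero). -/
def dec {N : ℕ} (i : Fin N) (J : MI N) : MI N := Function.update J i (J i - 1)

lemma inc_same {N : ℕ} (i : Fin N) (J : MI N) : inc i J i = J i + 1 := by simp [inc]

lemma inc_ne {N : ℕ} {i j : Fin N} (h : j ≠ i) (J : MI N) : inc i J j = J j := by simp [inc, h]

lemma dec_inc {N : ℕ} (i : Fin N) (J : MI N) : dec i (inc i J) = J := by simp [dec, inc]

lemma inc_dec {N : ℕ} (i : Fin N) (J : MI N) (h : J i ≠ 0) : inc i (dec i J) = J := by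
  have : J i - 1 + 1 = J i := by omega
  simp [dec, inc, this]

lemma inc_comm {N : ℕ} (i j : Fin N) (J : MI N) : inc i (inc j J) = inc j (inc i J) := by
  funext k
  by_cases hi : k = i <;> by_cases hj : k = j <;> by_cases hij : i = j <;>
    simp_all [inc, Function.update_apply]

lemma inc_injective {N : ℕ} (i : Fin N) : Function.Injective (inc i) :=
  Function.LeftInverse.injective (dec_inc i)

lemma sum_inc {N : ℕ} (i : Fin N) (J : MI N) : ∑ k, inc i J k = ∑ k, J k + 1 := by
  rw [inc, Finset.sum_update_of_mem (Finset.mem_univ i), ← Finset.sum_erase_add _ _ (Finset.mem_univ i),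
    Finset.sdiff_singleton_eq_erase]
  omega

lemma prod_fact_inc {N : ℕ} (i : Fin N) (J : MI N) :
    ∏ k, ((inc i J k).factorial : ℝ) = (J i + 1) * ∏ k, ((J k).factorial : ℝ) := by
  rw [← Finset.mul_prod_erase _ _ (Finset.mem_univ i),
    ← Finset.mul_prod_erase (Finset.univ) (fun k => ((J k).factorial : ℝ)) (Finset.mem_univ i),
    inc_same, Nat.factorial_succ,
    Finset.prod_congr rfl (fun k hk => by rw [inc_ne (Finset.ne_of_mem_erase hk)])]
  push_cast; ring

lemma MI_induction {N : ℕ} {P : MI N → Prop} (h0 : P 0) (hs : ∀ i J, P J → P (inc i J)) (J : MI N) :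
    P J := by
  induction hn : ∑ k, J k generalizing J with
  | zero =>
    have : J = 0 := by
      funext k
      exact (Finset.sum_eq_zero_iff.1 hn) k (Finset.mem_univ k)
    exact this ▸ h0
  | succ n ih =>
    obtain ⟨i, hi⟩ : ∃ i, J i ≠ 0 := by
      by_contra! hc
      simp [hc] at hn
    rw [← inc_dec i J hi]
    refine hs i _ (ih _ ?_)
    have := sum_inc i (dec i J)
    rw [inc_dec i J hi] at this
    omega

/-- The monomial `∏ c_i ^ I_i` in a family of (usually commuting) monoid elements, the factors
being multiplied in the order of `Fin N`. -/
def mpow {N : ℕ} {M : Type*} [Monoid M] (c : Fin N → M) (I : MI N) : M :=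
  ((List.finRange N).map fun i => c i ^ I i).prod

lemma mpow_zero {N : ℕ} {M : Type*} [Monoid M] (c : Fin N → M) : mpow c 0 = 1 := by
  unfold mpow
  apply List.prod_eq_one
  simp

lemma commute_mpow {N : ℕ} {M : Type*} [Monoid M] {c : Fin N → M} {a : M}
    (h : ∀ i, Commute a (c i)) (I : MI N) : Commute a (mpow c I) := by
  refine Commute.list_prod_right _ _ ?_
  simp only [List.mem_map, forall_exists_index, and_imp, forall_apply_eq_imp_iff₂]
  exact fun i _ => (h i).pow_right _

lemma mpow_inc {N : ℕ} {M : Type*} [Monoid M] {c : Fin N → M} (hc : ∀ i j, Commute (c i) (c j))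
    (i : Fin N) (I : MI N) : mpow c (inc i I) = c i * mpow c I := by
  have key : ∀ l : List (Fin N), l.Nodup →
      (l.map fun k => c k ^ inc i I k).prod =
        (if i ∈ l then c i else 1) * (l.map fun k => c k ^ I k).prod := by
    intro l
    induction l with
    | nil => simp
    | cons a l ih =>
      intro hl
      obtain ⟨ha, hl⟩ := List.nodup_cons.1 hl
      rw [List.map_cons, List.prod_cons, ih hl, List.map_cons, List.prod_cons]
      by_cases hai : i = a
      · subst hai
        rw [if_neg ha, if_pos List.mem_cons_self, inc_same, pow_succ', one_mul, mul_assoc]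
      · rw [inc_ne (Ne.symm hai)]
        simp only [List.mem_cons, hai, false_or]
        split_ifs
        · rw [← mul_assoc, ← mul_assoc, (((hc i a).pow_right _).eq)]
        · simp
  simpa [mpow] using key _ (List.nodup_finRange N)

/-! ### The characteristic as a commutator series -/

section Abstract

variable {N : ℕ} {R : Type*} [CommRing R] [Algebra ℝ R]

/-- Multiplication by `a`, as a linear operator. -/
abbrev mulE (a : R) : Module.End ℝ R := LinearMap.mulLeft ℝ a

/-- The commutator `A ↦ A x_j - x_j A`. -/
def adx (x : Fin N → R) (j : Fin N) : Module.End ℝ (Module.End ℝ R) :=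
  LinearMap.mulRight ℝ (mulE (x j)) - LinearMap.mulLeft ℝ (mulE (x j))

lemma adx_apply (x : Fin N → R) (j : Fin N) (A : Module.End ℝ R) (f : R) :
    adx x j A f = A (x j * f) - x j * A f := rfl

lemma adx_comm (x : Fin N → R) (i j : Fin N) : Commute (adx x i) (adx x j) := by
  ext A f
  simp only [Module.End.mul_apply, adx_apply, mul_sub, mul_left_comm]
  ring

/-- The iterated commutator `ad_x^K A`. -/
def adK (x : Fin N → R) (K : MI N) (A : Module.End ℝ R) : Module.End ℝ R := mpow (adx x) K A

lemma adK_zero (x : Fin N → R) (A : Module.End ℝ R) : adK x 0 A = A := by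
  simp [adK, mpow_zero]

lemma adK_inc (x : Fin N → R) (i : Fin N) (K : MI N) (A : Module.End ℝ R) :
    adK x (inc i K) A = adx x i (adK x K A) := by
  simp [adK, mpow_inc (adx_comm x)]

lemma adK_sum (x : Fin N → R) (K : MI N) {ι : Type*} (s : Finset ι) (A : ι → Module.End ℝ R) :
    adK x K (∑ k ∈ s, A k) = ∑ k ∈ s, adK x K (A k) := by
  simp [adK]

/-- Operators which agree on a subspace stable under multiplication by the `x_j` have the same
iterated commutators there. -/
lemma adK_congr (x : Fin N → R) {W : Set R} (hW : ∀ j, ∀ f ∈ W, x j * f ∈ W)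
    {A B : Module.End ℝ R} (hAB : ∀ f ∈ W, A f = B f) (K : MI N) :
    ∀ f ∈ W, adK x K A f = adK x K B f := by
  induction K using MI_induction with
  | h0 => simpa [adK_zero] using hAB
  | hs i K ih =>
    intro f hf
    rw [adK_inc, adK_inc, adx_apply, adx_apply, ih f hf, ih _ (hW i f hf)]

lemma adK_mul_of_commute (x : Fin N → R) {U : Module.End ℝ R}
    (hU : ∀ j f, U (x j * f) = x j * U f) (A : Module.End ℝ R) (K : MI N) :
    adK x K (A * U) = adK x K A * U := by
  induction K using MI_induction with
  | h0 => simp [adK_zero]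
  | hs i K ih =>
    ext f
    rw [adK_inc, adK_inc, adx_apply, ih]
    simp [adx_apply, hU]

lemma adK_mulE (x : Fin N → R) (a : R) (K : MI N) (hK : K ≠ 0) : adK x K (mulE a) = 0 := by
  induction K using MI_induction with
  | h0 => exact absurd rfl hK
  | hs i K ih =>
    rw [adK_inc]
    by_cases h : K = 0
    · subst h
      ext f
      simp [adK_zero, adx_apply, mul_left_comm]
    · rw [ih h, map_zero]

/-- `D_1,…,D_N` are commuting derivations dual to the coordinates `x_1,…,x_N`. -/
structure CoordDer (x : Fin N → R) (D : Fin N → Module.End ℝ R) : Prop where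
  /-- The derivations commute. -/
  comm : ∀ i j, Commute (D i) (D j)
  /-- The product rule. -/
  leibniz : ∀ i f g, D i (f * g) = f * D i g + D i f * g
  /-- `D_i x_j = δ_{ij}`. -/
  dual : ∀ i j, D i (x j) = if i = j then 1 else 0

variable {x : Fin N → R} {D : Fin N → Module.End ℝ R}

/-- The Weyl-algebra relation `[D_i, x_i] = 1`, iterated. -/
lemma adK_mul_D (h : CoordDer x D) (A : Module.End ℝ R) (i : Fin N) (K : MI N) :
    adK x K (A * D i) = adK x K A * D i + (K i : ℝ) • adK x (dec i K) A := by
  induction K using MI_induction with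
  | h0 => simp [adK_zero]
  | hs j K ih =>
    ext f
    rw [adK_inc, adK_inc, adx_apply, ih]
    by_cases hij : i = j
    · subst hij
      rw [dec_inc, inc_same]
      simp only [LinearMap.add_apply, Module.End.mul_apply, LinearMap.smul_apply, adx_apply,
        h.leibniz, h.dual, if_true, one_mul, map_add]
      by_cases hK : K i = 0
      · simp [hK]; ring
      · have hd : adK x K A f = adx x i (adK x (dec i K) A) f := by
          rw [← adK_inc, inc_dec i K hK]
        rw [adx_apply] at hd
        rw [hd]
        push_cast
        simp only [add_smul, smul_sub, one_smul, mul_add, Algebra.mul_smul_comm]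
        ring_nf
    · rw [inc_ne hij]
      have hd : dec i (inc j K) = inc j (dec i K) := by
        funext k
        by_cases hi : k = i <;> by_cases hj : k = j <;>
          simp_all [inc, dec, Function.update_apply]
      rw [hd, adK_inc]
      simp only [LinearMap.add_apply, Module.End.mul_apply, LinearMap.smul_apply, adx_apply,
        h.leibniz, h.dual, if_neg hij, zero_mul, add_zero, smul_sub, mul_add,
        Algebra.mul_smul_comm]
      ring

/-- The coefficient `(-1)^{|K|} / K!`. -/
noncomputable def coef (K : MI N) : ℝ := (-1) ^ (∑ k, K k) * (∏ k, ((K k).factorial : ℝ))⁻¹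

lemma coef_zero : coef (0 : MI N) = 1 := by simp [coef]

lemma coef_inc (i : Fin N) (K : MI N) : coef (inc i K) * (K i + 1) = - coef K := by
  have h1 : (K i + 1 : ℝ) ≠ 0 := by positivity
  rw [coef, coef, sum_inc, prod_fact_inc, mul_inv, pow_succ]
  field_simp

/-- Every element is killed by all but finitely many of the iterated commutators of `A`. -/
def LF (x : Fin N → R) (A : Module.End ℝ R) : Prop := ∀ f, {K | adK x K A f ≠ 0}.Finite

/-- The series `Σ_K ((-1)^{|K|} / K!) D^K ∘ ad_x^K A`, which depends only on the operator `A`. -/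
noncomputable def Psi (x : Fin N → R) (D : Fin N → Module.End ℝ R) (A : Module.End ℝ R) (f : R) :
    R :=
  ∑ᶠ K : MI N, coef K • mpow D K (adK x K A f)

lemma LF.support {A : Module.End ℝ R} (hA : LF x A) (f : R) :
    (Function.support fun K => coef K • mpow D K (adK x K A f)).Finite := by
  refine (hA f).subset fun K hK => ?_
  simp only [Function.mem_support] at hK
  intro h0
  simp [h0] at hK

lemma Psi_add {A : Module.End ℝ R} (hA : LF x A) (f g : R) :
    Psi x D A (f + g) = Psi x D A f + Psi x D A g := by
  rw [Psi, Psi, Psi, ← finsum_add_distrib (hA.support f) (hA.support g)]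
  simp

lemma Psi_smul (A : Module.End ℝ R) (c : ℝ) (f : R) :
    Psi x D A (c • f) = c • Psi x D A f := by
  rw [Psi, Psi, smul_finsum]
  simp [smul_comm c]

lemma Psi_congr {W : Set R} (hW : ∀ j, ∀ f ∈ W, x j * f ∈ W) {A B : Module.End ℝ R}
    (hAB : ∀ f ∈ W, A f = B f) {f : R} (hf : f ∈ W) : Psi x D A f = Psi x D B f := by
  unfold Psi
  refine finsum_congr fun K => ?_
  rw [adK_congr x hW hAB K f hf]

lemma LF.sum {ι : Type*} {s : Finset ι} {A : ι → Module.End ℝ R} (hA : ∀ k ∈ s, LF x (A k)) :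
    LF x (∑ k ∈ s, A k) := by
  intro f
  refine (s.finite_toSet.biUnion (t := fun k => {K | adK x K (A k) f ≠ 0})
    (fun k hk => hA k hk f)).subset fun K hK => ?_
  simp only [Set.mem_ofPred_eq, adK_sum, LinearMap.sum_apply] at hK
  obtain ⟨k, hk, h⟩ := Finset.exists_ne_zero_of_sum_ne_zero hK
  exact Set.mem_biUnion hk h

lemma Psi_sum {ι : Type*} {s : Finset ι} {A : ι → Module.End ℝ R} (hA : ∀ k ∈ s, LF x (A k))
    (f : R) : Psi x D (∑ k ∈ s, A k) f = ∑ k ∈ s, Psi x D (A k) f := by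
  simp only [Psi]
  rw [← finsum_sum_comm s _ (fun k hk => (hA k hk).support f)]
  simp [adK_sum, Finset.smul_sum]

lemma LF.mul_of_commute {A U : Module.End ℝ R} (hA : LF x A)
    (hU : ∀ j f, U (x j * f) = x j * U f) : LF x (A * U) := fun f => by
  simpa [adK_mul_of_commute x hU] using hA (U f)

lemma Psi_mul_of_commute {U : Module.End ℝ R} (hU : ∀ j f, U (x j * f) = x j * U f)
    (A : Module.End ℝ R) (f : R) : Psi x D (A * U) f = Psi x D A (U f) := by
  simp [Psi, adK_mul_of_commute x hU]

lemma LF.mul_D (h : CoordDer x D) {A : Module.End ℝ R} (hA : LF x A) (i : Fin N) :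
    LF x (A * D i) := by
  intro f
  refine ((hA (D i f)).union ((hA f).image (inc i))).subset fun K hK => ?_
  rw [Set.mem_ofPred_eq, adK_mul_D h] at hK
  by_contra hc
  simp only [Set.mem_union, Set.mem_ofPred_eq, Set.mem_image, not_or, not_not, not_exists,
    not_and] at hc
  apply hK
  by_cases hKi : K i = 0
  · simp [hKi, hc.1]
  · have : adK x (dec i K) A f = 0 := by
      by_contra h0
      exact hc.2 _ h0 (inc_dec i K hKi)
    simp [this, hc.1]

/-- `Ψ(A ∘ D_i) = [Ψ(A), D_i]`. -/
lemma Psi_mul_D (h : CoordDer x D) {A : Module.End ℝ R} (hA : LF x A) (i : Fin N) (f : R) :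
    Psi x D (A * D i) f = Psi x D A (D i f) - D i (Psi x D A f) := by
  have hsupp2 : Function.support (fun K : MI N =>
      coef K • mpow D K ((K i : ℝ) • adK x (dec i K) A f)) ⊆ Set.range (inc i) := by
    intro K hK
    by_cases hKi : K i = 0
    · simp [hKi] at hK
    · exact ⟨dec i K, inc_dec i K hKi⟩
  have e1 := (D i).toAddMonoidHom.map_finsum (hA.support (D := D) f)
  simp only [LinearMap.toAddMonoidHom_coe] at e1
  -- The terms with `K_i = 0` vanish; the others are reindexed by `K = inc i L`.
  have e2 : (∑ᶠ K : MI N, coef K • mpow D K ((K i : ℝ) • adK x (dec i K) A f)) =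
      - D i (Psi x D A f) := by
    rw [← finsum_mem_univ, finsum_mem_inter_support_eq' _ Set.univ (Set.range (inc i))
      (fun K hK => by simp [hsupp2 hK]), finsum_mem_range (inc_injective i), Psi,
      e1, ← finsum_neg_distrib]
    refine finsum_congr fun K => ?_
    rw [dec_inc, inc_same, mpow_inc h.comm, map_smul, smul_smul]
    push_cast
    rw [coef_inc]
    simp
  have hfin2 : (Function.support (fun K : MI N =>
      coef K • mpow D K ((K i : ℝ) • adK x (dec i K) A f))).Finite := by
    refine ((hA f).image (inc i)).subset fun K hK => ?_
    obtain ⟨L, rfl⟩ := hsupp2 hK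
    refine ⟨L, fun h0 => ?_, rfl⟩
    simp [dec_inc, h0] at hK
  rw [sub_eq_add_neg, ← e2]
  simp only [Psi]
  rw [← finsum_add_distrib (hA.support (D i f)) hfin2]
  refine finsum_congr fun K => ?_
  rw [adK_mul_D h]
  simp

lemma LF_mulE (a : R) : LF x (mulE a) := fun f =>
  (Set.finite_singleton (0 : MI N)).subset fun K hK => by
    by_contra h
    exact hK (by rw [adK_mulE x a K h]; rfl)

lemma LF_mono (h : CoordDer x D) (a : R) (I : MI N) : LF x (mulE a * mpow D I) := by
  induction I using MI_induction with
  | h0 => simpa [mpow_zero] using LF_mulE a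
  | hs i I ih =>
    rw [mpow_inc h.comm, (commute_mpow (h.comm i) I).eq, ← mul_assoc]
    exact ih.mul_D h i

/-- `Ψ(a D^I)` is multiplication by `(-1)^{|I|} D^I a`. -/
lemma Psi_mono (h : CoordDer x D) (a : R) (I : MI N) (f : R) :
    Psi x D (mulE a * mpow D I) f = ((-1 : ℝ) ^ (∑ k, I k) • mpow D I a) * f := by
  induction I using MI_induction generalizing f with
  | h0 =>
    rw [mpow_zero, mul_one, Psi, finsum_eq_single _ 0 (fun K hK => by simp [adK_mulE x a K hK])]
    simp [coef_zero, mpow_zero, adK_zero]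
  | hs i I ih =>
    rw [mpow_inc h.comm]
    nth_rewrite 1 [(commute_mpow (h.comm i) I).eq]
    rw [← mul_assoc, Psi_mul_D h (LF_mono h a I), ih, ih, h.leibniz, sum_inc, pow_succ]
    simp

end Abstract

/-! ### Local functions and total derivatives -/

section Jets

variable {N : ℕ}

/-- The projection of the jet space onto the base coordinates and the jet coordinates in `S`. -/
def piS (S : Finset (MI N)) : JetPt N →ₗ[ℝ] (Fin N → ℝ) × (↥S → ℝ) where
  toFun p := (p.1, fun J => p.2 J.1)
  map_add' _ _ := rfl
  map_smul' _ _ := rfl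

/-- The derivative of `f` at `p` in the direction `v`. -/
noncomputable def dir (v : JetPt N) (f : Fn N) (p : JetPt N) : ℝ :=
  deriv (fun t : ℝ => f (p + t • v)) 0

/-- `f` is the pullback of the smooth function `g` on the finite jet space of `S`. -/
def Rep (S : Finset (MI N)) (g : ((Fin N → ℝ) × (↥S → ℝ)) → ℝ) (f : Fn N) : Prop :=
  ContDiff ℝ (⊤ : ℕ∞) g ∧ ∀ p, f p = g (piS S p)

lemma isLocal_iff {f : Fn N} : IsLocal f ↔ ∃ S g, Rep S g f := Iff.rfl

lemma hasDerivAt_line {S : Finset (MI N)} (p v : JetPt N) (t : ℝ) :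
    HasDerivAt (fun t : ℝ => piS S (p + t • v)) (piS S v) t := by
  simp only [map_add, map_smul]
  simpa using ((hasDerivAt_id t).smul_const (piS S v)).const_add (piS S p)

lemma Rep.hasDerivAt {S : Finset (MI N)} {g} {f : Fn N} (h : Rep S g f) (p v : JetPt N) :
    HasDerivAt (fun t : ℝ => f (p + t • v)) (fderiv ℝ g (piS S p) (piS S v)) 0 := by
  have h1 : HasFDerivAt g (fderiv ℝ g (piS S p)) (piS S (p + (0 : ℝ) • v)) := by
    rw [zero_smul, add_zero]
    exact (h.1.differentiable (by simp) _).hasFDerivAt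
  simp only [h.2]
  exact h1.comp_hasDerivAt (0 : ℝ) (hasDerivAt_line p v 0)

lemma Rep.dir_eq {S : Finset (MI N)} {g} {f : Fn N} (h : Rep S g f) (p v : JetPt N) :
    dir v f p = fderiv ℝ g (piS S p) (piS S v) := (h.hasDerivAt p v).deriv

lemma IsLocal.hasDerivAt {f : Fn N} (h : IsLocal f) (p v : JetPt N) :
    HasDerivAt (fun t : ℝ => f (p + t • v)) (dir v f p) 0 := by
  obtain ⟨S, g, h⟩ := h
  rw [Rep.dir_eq h]
  exact Rep.hasDerivAt h p v

/-- Second derivatives: differentiating `p ↦ ∂_{W(p)} f` along `v`, for an affine vector field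
`W`, gives a symmetric bilinear term and the derivative of `f` along the derivative of `W`. -/
lemma dir_dir {f : Fn N} (h : IsLocal f) : ∃ B : JetPt N → JetPt N → JetPt N → ℝ,
    (∀ p v w, B p v w = B p w v) ∧
    ∀ (p v w : JetPt N) (W : JetPt N → JetPt N), (∀ t : ℝ, W (p + t • v) = W p + t • w) →
      dir v (fun q => dir (W q) f q) p = B p v (W p) + dir w f p := by
  obtain ⟨S, g, h⟩ := isLocal_iff.1 h
  refine ⟨fun p v w => fderiv ℝ (fderiv ℝ g) (piS S p) (piS S v) (piS S w), ?_, ?_⟩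
  · intro p v w
    exact (h.1.contDiffAt.isSymmSndFDerivAt
      (by rw [minSmoothness_of_isRCLikeNormedField]; exact WithTop.coe_le_coe.2 (le_top (a := (2 : ℕ∞))))) _ _
  · intro p v w W hW
    have hd : Differentiable ℝ (fderiv ℝ g) :=
      (h.1.fderiv_right (m := 1) (by norm_cast)).differentiable (by simp)
    have h1 : HasFDerivAt (fderiv ℝ g) (fderiv ℝ (fderiv ℝ g) (piS S p))
        (piS S (p + (0 : ℝ) • v)) := by
      rw [zero_smul, add_zero]
      exact (hd _).hasFDerivAt
    have h1' : HasDerivAt (fun t : ℝ => fderiv ℝ g (piS S (p + t • v)))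
        (fderiv ℝ (fderiv ℝ g) (piS S p) (piS S v)) 0 :=
      h1.comp_hasDerivAt (0 : ℝ) (hasDerivAt_line p v 0)
    have h2 := (h1'.clm_apply (hasDerivAt_line (S := S) (W p) w 0)).deriv
    simp only [zero_smul, add_zero] at h2
    rw [dir]
    simp only [h.dir_eq, hW]
    exact h2

lemma dir_mul {f g : Fn N} (hf : IsLocal f) (hg : IsLocal g) (v p : JetPt N) :
    dir v (f * g) p = f p * dir v g p + dir v f p * g p := by
  have := ((hf.hasDerivAt p v).mul (hg.hasDerivAt p v)).deriv
  simp only [zero_smul, add_zero] at this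
  rw [add_comm, ← this]
  rfl

lemma dir_add {f g : Fn N} (hf : IsLocal f) (hg : IsLocal g) (v p : JetPt N) :
    dir v (f + g) p = dir v f p + dir v g p :=
  ((hf.hasDerivAt p v).add (hg.hasDerivAt p v)).deriv

lemma dir_smul {f : Fn N} (hf : IsLocal f) (c : ℝ) (v p : JetPt N) :
    dir v (c • f) p = c * dir v f p :=
  ((hf.hasDerivAt p v).const_mul c).deriv

lemma pderivX_eq (i : Fin N) (f : Fn N) (p : JetPt N) :
    pderivX i f p = dir (Pi.single i 1, 0) f p := by
  have := deriv_comp_const_add (fun t => f (Function.update p.1 i t, p.2)) (p.1 i) 0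
  rw [add_zero] at this
  rw [pderivX, dir, ← this]
  congr 1
  funext t
  congr 1
  ext k
  · by_cases hk : k = i
    · subst hk; simp
    · simp [hk]
  · simp

lemma pderivU_eq (J : MI N) (f : Fn N) : pderivU J f = fun p => dir (0, Pi.single J 1) f p := by
  funext p
  have := deriv_comp_const_add (fun t => f (p.1, Function.update p.2 J t)) (p.2 J) 0
  rw [add_zero] at this
  rw [pderivU, dir, ← this]
  congr 1
  funext t
  congr 1
  ext k
  · simp
  · by_cases hk : k = J
    · subst hk; simp
    · simp [hk]

/-- The vector field of the total derivative `d/dx^i`. -/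
def vf (i : Fin N) (p : JetPt N) : JetPt N := (Pi.single i 1, fun J => p.2 (inc i J))

lemma Rep.pderivU_eq_zero {S : Finset (MI N)} {g} {f : Fn N} (h : Rep S g f) {J : MI N}
    (hJ : J ∉ S) : pderivU J f = 0 := by
  rw [pderivU_eq]
  funext p
  rw [h.dir_eq]
  have : piS S (0, Pi.single J 1) = 0 := by
    refine Prod.ext rfl (funext fun K => ?_)
    have : K.1 ≠ J := fun e => hJ (e ▸ K.2)
    simp [piS, this]
  rw [this, map_zero]; rfl

/-- On local functions the total derivative is the derivative along `vf i`; the infinite sum in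
its definition has finite support there. -/
lemma Dtot_eq {f : Fn N} (h : IsLocal f) (i : Fin N) : Dtot i f = fun p => dir (vf i p) f p := by
  obtain ⟨S, g, h⟩ := isLocal_iff.1 h
  funext p
  rw [Dtot, tsum_eq_sum (s := S) (fun J hJ => by rw [h.pderivU_eq_zero hJ]; simp), pderivX_eq,
    h.dir_eq, h.dir_eq]
  have : piS S (vf i p) = piS S (Pi.single i 1, 0) +
      ∑ J ∈ S, p.2 (inc i J) • piS S (0, Pi.single J 1) := by
    refine Prod.ext (by simp [piS, vf, Prod.fst_sum]) (funext fun K => ?_)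
    simp [piS, vf, Prod.snd_sum, Pi.single_apply, K.2]
  rw [this, map_add, map_sum]
  simp [pderivU_eq, h.dir_eq]

/-- A local function may be viewed on a larger finite jet space. -/
lemma Rep.mono {S T : Finset (MI N)} {g} {f : Fn N} (h : Rep S g f) (hST : S ⊆ T) :
    Rep T (fun y => g (y.1, fun J => y.2 ⟨J.1, hST J.2⟩)) f := by
  refine ⟨h.1.comp ?_, h.2⟩
  fun_prop

lemma isLocal_const (c : ℝ) : IsLocal (N := N) fun _ => c :=
  ⟨∅, fun _ => c, contDiff_const, fun _ => rfl⟩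

lemma isLocal_coord (i : Fin N) : IsLocal (N := N) fun p => p.1 i :=
  ⟨∅, fun y => y.1 i, by fun_prop, fun _ => rfl⟩

lemma IsLocal.add {f g : Fn N} (hf : IsLocal f) (hg : IsLocal g) : IsLocal (f + g) := by
  classical
  obtain ⟨S, a, ha⟩ := isLocal_iff.1 hf
  obtain ⟨T, b, hb⟩ := isLocal_iff.1 hg
  have ha' := ha.mono (Finset.subset_union_left (s₂ := T))
  have hb' := hb.mono (Finset.subset_union_right (s₁ := S))
  exact ⟨S ∪ T, _, ha'.1.add hb'.1, fun p => congrArg₂ (· + ·) (ha'.2 p) (hb'.2 p)⟩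

lemma IsLocal.mul {f g : Fn N} (hf : IsLocal f) (hg : IsLocal g) : IsLocal (f * g) := by
  classical
  obtain ⟨S, a, ha⟩ := isLocal_iff.1 hf
  obtain ⟨T, b, hb⟩ := isLocal_iff.1 hg
  have ha' := ha.mono (Finset.subset_union_left (s₂ := T))
  have hb' := hb.mono (Finset.subset_union_right (s₁ := S))
  exact ⟨S ∪ T, _, ha'.1.mul hb'.1, fun p => congrArg₂ (· * ·) (ha'.2 p) (hb'.2 p)⟩

lemma IsLocal.pderivU {f : Fn N} (hf : IsLocal f) (J : MI N) : IsLocal (pderivU J f) := by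
  obtain ⟨S, g, h⟩ := isLocal_iff.1 hf
  refine ⟨S, fun y => fderiv ℝ g y (piS S (0, Pi.single J 1)), ?_, fun p => ?_⟩
  · exact (h.1.fderiv_right (m := (⊤ : ℕ∞)) (by norm_cast)).clm_apply contDiff_const
  · rw [pderivU_eq]
    exact h.dir_eq _ _

lemma IsLocal.Dtot {f : Fn N} (hf : IsLocal f) (i : Fin N) : IsLocal (Dtot i f) := by
  classical
  rw [Dtot_eq hf]
  obtain ⟨S, g, h⟩ := isLocal_iff.1 hf
  have hS : S ⊆ S ∪ S.image (inc i) := Finset.subset_union_left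
  have hS' : ∀ J ∈ S, inc i J ∈ S ∪ S.image (inc i) := fun J hJ =>
    Finset.mem_union_right _ (Finset.mem_image_of_mem _ hJ)
  refine ⟨S ∪ S.image (inc i), fun y => fderiv ℝ g (y.1, fun J => y.2 ⟨J.1, hS J.2⟩)
    (Pi.single i 1, fun J => y.2 ⟨inc i J.1, hS' _ J.2⟩), ?_, fun p => ?_⟩
  · refine ((h.1.fderiv_right (m := (⊤ : ℕ∞)) (by norm_cast)).comp ?_).clm_apply ?_
    · fun_prop
    · fun_prop
  · exact h.dir_eq _ _

variable (N) in
/-- The algebra of local functions. -/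
def Loc : Subalgebra ℝ (Fn N) where
  carrier := {f | IsLocal f}
  mul_mem' := IsLocal.mul
  add_mem' := IsLocal.add
  algebraMap_mem' c := isLocal_const c

/-- The total derivative on local functions. -/
noncomputable def DE (i : Fin N) : Module.End ℝ (Loc N) where
  toFun f := ⟨Dtot i f.1, IsLocal.Dtot f.2 i⟩
  map_add' f g := by
    ext p
    simp only [AddMemClass.coe_add, Pi.add_apply]
    rw [Dtot_eq (IsLocal.add f.2 g.2), Dtot_eq f.2, Dtot_eq g.2]
    exact dir_add f.2 g.2 _ _
  map_smul' c f := by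
    ext p
    have h : IsLocal (c • f.1) := (c • f).2
    change Dtot i (c • f.1) p = c * Dtot i f.1 p
    rw [Dtot_eq h, Dtot_eq f.2]
    exact dir_smul f.2 _ _ _

/-- The vertical derivative `∂/∂u_J` on local functions. -/
noncomputable def UE (J : MI N) : Module.End ℝ (Loc N) where
  toFun f := ⟨pderivU J f.1, IsLocal.pderivU f.2 J⟩
  map_add' f g := by
    ext p
    simp only [AddMemClass.coe_add, Pi.add_apply, pderivU_eq]
    exact dir_add f.2 g.2 _ _
  map_smul' c f := by
    ext p
    simp only [pderivU_eq]
    exact dir_smul f.2 _ _ _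

lemma UE_comm (J K : MI N) : Commute (UE J) (UE K) := by
  ext f p
  obtain ⟨B, hB, h⟩ := dir_dir f.2
  change pderivU J (pderivU K f.1) p = pderivU K (pderivU J f.1) p
  simp only [pderivU_eq]
  rw [h p (0, Pi.single J 1) 0 (fun _ => (0, Pi.single K 1)) (by simp),
    h p (0, Pi.single K 1) 0 (fun _ => (0, Pi.single J 1)) (by simp), hB]

lemma DE_comm (i j : Fin N) : Commute (DE i) (DE j) := by
  ext f p
  obtain ⟨B, hB, h⟩ := dir_dir f.2
  change Dtot i (Dtot j f.1) p = Dtot j (Dtot i f.1) p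
  have key : ∀ i j : Fin N, Dtot i (Dtot j f.1) p = B p (vf i p) (vf j p) +
      dir (0, fun J => p.2 (inc i (inc j J))) f.1 p := by
    intro i j
    rw [Dtot_eq (IsLocal.Dtot f.2 j), Dtot_eq f.2]
    refine h p (vf i p) _ (vf j) fun t => ?_
    refine Prod.ext (by simp [vf]) (funext fun J => ?_)
    simp [vf]
  rw [key, key, hB]
  simp only [inc_comm i j]

/-- The base coordinate `x^j` as a local function. -/
def xL (j : Fin N) : Loc N := ⟨fun p => p.1 j, isLocal_coord j⟩

lemma dir_xL (j : Fin N) (v p : JetPt N) : dir v (xL j).1 p = v.1 j := by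
  have : HasDerivAt (fun t : ℝ => p.1 j + t * v.1 j) (v.1 j) 0 := by
    simpa using ((hasDerivAt_id (0 : ℝ)).mul_const (v.1 j)).const_add (p.1 j)
  exact this.deriv

lemma coordDer : CoordDer (xL (N := N)) DE where
  comm := DE_comm
  leibniz i f g := by
    ext p
    change Dtot i (f.1 * g.1) p = f.1 p * Dtot i g.1 p + Dtot i f.1 p * g.1 p
    rw [Dtot_eq (IsLocal.mul f.2 g.2), Dtot_eq f.2, Dtot_eq g.2]
    exact dir_mul f.2 g.2 _ _
  dual i j := by
    ext p
    change Dtot i (xL j).1 p = _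
    rw [Dtot_eq (xL j).2]
    simp only [dir_xL]
    by_cases h : i = j
    · subst h; simp [vf]
    · simp [vf, h, Ne.symm h]

lemma UE_x (J : MI N) (j : Fin N) (f : Loc N) : UE J (xL j * f) = xL j * UE J f := by
  ext p
  change pderivU J ((xL j).1 * f.1) p = p.1 j * pderivU J f.1 p
  simp only [pderivU_eq]
  rw [dir_mul (xL j).2 f.2, dir_xL]
  simp [xL]

/-- `(∂/∂u)^α` on local functions. -/
noncomputable def UEpow (α : MI N →₀ ℕ) : Module.End ℝ (Loc N) :=
  (α.support.toList.map fun J => UE J ^ α J).prod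

/-- Products of powers in `Module.End` compute the iterated compositions by which `DPow` and
`UPow` are defined. -/
lemma foldr_coe {ι : Type*} (δ : ι → Fn N → Fn N) (Δ : ι → Module.End ℝ (Loc N))
    (h : ∀ i f, (Δ i f).1 = δ i f.1) (k : ι → ℕ) (l : List ι) (f : Loc N) :
    ((l.map fun i => Δ i ^ k i).prod f).1 =
      l.foldr (fun i g => (δ i)^[k i] ∘ g) id f.1 := by
  induction l with
  | nil => rfl
  | cons a l ih =>
    have hk : ∀ (n : ℕ) (g : Loc N), ((Δ a ^ n) g).1 = (δ a)^[n] g.1 := by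
      intro n
      induction n with
      | zero => intro g; rfl
      | succ n ihn => intro g; rw [pow_succ, Module.End.mul_apply, ihn, h]; rfl
    simp only [List.map_cons, List.prod_cons, Module.End.mul_apply, hk, ih, List.foldr_cons,
      Function.comp_apply]

lemma coe_mpow (I : MI N) (f : Loc N) : (mpow DE I f).1 = DPow I f.1 :=
  foldr_coe Dtot DE (fun _ _ => rfl) I _ f

lemma coe_UEpow (α : MI N →₀ ℕ) (f : Loc N) : (UEpow α f).1 = UPow α f.1 :=
  foldr_coe pderivU UE (fun _ _ => rfl) α _ f

lemma UEpow_x (α : MI N →₀ ℕ) (j : Fin N) (f : Loc N) :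
    UEpow α (xL j * f) = xL j * UEpow α f := by
  have : Commute (mulE (xL j)) (UEpow α) := by
    refine Commute.list_prod_right _ _ ?_
    simp only [List.mem_map, forall_exists_index, and_imp, forall_apply_eq_imp_iff₂]
    refine fun J _ => Commute.pow_right ?_ _
    exact LinearMap.ext fun f => (UE_x J j f).symm
  exact (LinearMap.congr_fun this.eq f).symm

/-- Local functions independent of the `u_J` with `|J| > m`. -/
def W (N m : ℕ) : Set (Loc N) := {f | ∀ J : MI N, m < ∑ i, J i → UE J f = 0}

lemma exists_W (f : Loc N) : ∃ m, f ∈ W N m := by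
  obtain ⟨S, g, h⟩ := isLocal_iff.1 f.2
  refine ⟨S.sup fun J => ∑ i, J i, fun J hJ => Subtype.ext (h.pderivU_eq_zero fun hS => ?_)⟩
  exact absurd (Finset.le_sup (f := fun J : MI N => ∑ i, J i) hS) (not_le.2 hJ)

lemma W_x {m : ℕ} (j : Fin N) (f : Loc N) (hf : f ∈ W N m) : xL j * f ∈ W N m := by
  intro J hJ
  rw [UE_x, hf J hJ, mul_zero]

lemma UEpow_eq_zero {m : ℕ} {f : Loc N} (hf : f ∈ W N m) {α : MI N →₀ ℕ} (hα : m < degf α) :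
    UEpow α f = 0 := by
  obtain ⟨J, hJ, hm⟩ := (Finset.lt_sup_iff).1 hα
  have hmem : J ∈ α.support.toList := Finset.mem_toList.2 hJ
  -- The factor `∂/∂u_J` with `|J| > m` is moved to the right, where it kills `f`.
  obtain ⟨l₁, l₂, hl⟩ := List.append_of_mem hmem
  have hc : ∀ l : List (MI N), Commute (UE J ^ α J) (l.map fun J => UE J ^ α J).prod := by
    intro l
    refine Commute.list_prod_right _ _ ?_
    simp only [List.mem_map, forall_exists_index, and_imp, forall_apply_eq_imp_iff₂]
    exact fun K _ => ((UE_comm J K).pow_left _).pow_right _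
  have h0 : (UE J ^ α J) f = 0 := by
    obtain ⟨n, hn⟩ := Nat.exists_eq_succ_of_ne_zero (Finsupp.mem_support_iff.1 hJ)
    rw [hn, pow_succ, Module.End.mul_apply, hf J hm, map_zero]
  rw [UEpow, hl, List.map_append, List.map_cons, List.prod_append, List.prod_cons, (hc l₂).eq,
    Module.End.mul_apply, Module.End.mul_apply, h0, map_zero, map_zero]

end Jets

/-! ### Operators from coefficient data -/

section Operators

variable {N : ℕ}

/-- The index of a unary operator built from a pair `(I, α)`. -/
def toIdx (s : MI N × (MI N →₀ ℕ)) : Idx N 1 := (fun _ => s.1, fun _ => s.2)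

lemma toIdx_bijective : Function.Bijective (toIdx (N := N)) := by
  refine ⟨fun s t h => Prod.ext (congrFun (congrArg Prod.fst h) 0)
    (congrFun (congrArg Prod.snd h) 0), fun s => ⟨(s.1 0, s.2 0), Prod.ext ?_ ?_⟩⟩ <;>
  · funext k
    rw [Subsingleton.elim k 0]
    rfl

lemma realizeP_one (q : OpData N 1) (f : Fn N) (pt : JetPt N) :
    realizeP q (fun _ => f) pt =
      ∑' s : MI N × (MI N →₀ ℕ), q (toIdx s) pt * DPow s.1 (UPow s.2 f) pt := by
  rw [realizeP, ← (Equiv.ofBijective _ toIdx_bijective).tsum_eq]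
  simp [toIdx]

/-- The coefficient `q_{I,α}` as a local function. -/
def cf {q : OpData N 1} (hq : Good q) (s : MI N × (MI N →₀ ℕ)) : Loc N := ⟨q (toIdx s), hq.1 _⟩

/-- The operator `q_{I,α} (d/dx)^I (∂/∂u)^α`. -/
noncomputable def term {q : OpData N 1} (hq : Good q) (s : MI N × (MI N →₀ ℕ)) :
    Module.End ℝ (Loc N) :=
  mulE (cf hq s) * mpow DE s.1 * UEpow s.2

lemma term_apply {q : OpData N 1} (hq : Good q) (s : MI N × (MI N →₀ ℕ)) (f : Loc N)
    (pt : JetPt N) : (term hq s f).1 pt = q (toIdx s) pt * DPow s.1 (UPow s.2 f.1) pt := by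
  rw [← coe_UEpow, ← coe_mpow]
  rfl

/-- Only finitely many indices contribute on the functions of jet order at most `m`; they fit
into a box of multi-indices times exponents. -/
lemma exists_box {q : OpData N 1} (hq : Good q) (m : ℕ) :
    ∃ (P : Finset (MI N)) (Q : Finset (MI N →₀ ℕ)),
      ∀ s : MI N × (MI N →₀ ℕ), degf s.2 ≤ m → s ∉ P ×ˢ Q → cf hq s = 0 := by
  classical
  have hfin : {s : MI N × (MI N →₀ ℕ) | cf hq s ≠ 0 ∧ degf s.2 ≤ m}.Finite := by
    refine ((hq.2 m).preimage toIdx_bijective.1.injOn).subset fun s hs => ?_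
    refine ⟨fun h => hs.1 (Subtype.ext h), ?_⟩
    simpa [toIdx] using hs.2
  refine ⟨hfin.toFinset.image Prod.fst, hfin.toFinset.image Prod.snd, fun s hs hn => ?_⟩
  by_contra h
  have hmem : s ∈ hfin.toFinset := hfin.mem_toFinset.2 ⟨h, hs⟩
  exact hn (Finset.mem_product.2
    ⟨Finset.mem_image_of_mem _ hmem, Finset.mem_image_of_mem _ hmem⟩)

lemma term_eq_zero {q : OpData N 1} (hq : Good q) {m : ℕ} {P : Finset (MI N)}
    {Q : Finset (MI N →₀ ℕ)}
    (h : ∀ s : MI N × (MI N →₀ ℕ), degf s.2 ≤ m → s ∉ P ×ˢ Q → cf hq s = 0)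
    {f : Loc N} (hf : f ∈ W N m) {s : MI N × (MI N →₀ ℕ)} (hs : s ∉ P ×ˢ Q) :
    term hq s f = 0 := by
  by_cases hd : degf s.2 ≤ m
  · simp [term, h s hd hs]
  · simp [term, UEpow_eq_zero hf (not_le.1 hd)]

lemma term_support {q : OpData N 1} (hq : Good q) (f : Loc N) :
    (Function.support fun s => term hq s f).Finite := by
  obtain ⟨m, hm⟩ := exists_W f
  obtain ⟨P, Q, h⟩ := exists_box hq m
  refine (P ×ˢ Q).finite_toSet.subset fun s hs => ?_
  by_contra hn
  exact hs (term_eq_zero hq h hm hn)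

/-- The operator on local functions realized by admissible coefficient data. -/
noncomputable def opE {q : OpData N 1} (hq : Good q) : Module.End ℝ (Loc N) where
  toFun f := ∑ᶠ s, term hq s f
  map_add' f g := by
    rw [← finsum_add_distrib (term_support hq f) (term_support hq g)]
    simp
  map_smul' c f := by
    rw [RingHom.id_apply, smul_finsum]
    simp

lemma opE_eq_sum {q : OpData N 1} (hq : Good q) {m : ℕ} {P : Finset (MI N)}
    {Q : Finset (MI N →₀ ℕ)}
    (h : ∀ s : MI N × (MI N →₀ ℕ), degf s.2 ≤ m → s ∉ P ×ˢ Q → cf hq s = 0)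
    {f : Loc N} (hf : f ∈ W N m) : opE hq f = (∑ s ∈ P ×ˢ Q, term hq s) f := by
  rw [LinearMap.sum_apply]
  exact finsum_eq_sum_of_support_subset _ fun s hs => by
    by_contra hn
    exact hs (term_eq_zero hq h hf hn)

lemma coe_sum {ι : Type*} (s : Finset ι) (F : ι → Loc N) (pt : JetPt N) :
    (∑ k ∈ s, F k).1 pt = ∑ k ∈ s, (F k).1 pt := by
  simp

lemma opE_apply {q : OpData N 1} (hq : Good q) (f : Loc N) (pt : JetPt N) :
    (opE hq f).1 pt = realizeP q (fun _ => f.1) pt := by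
  obtain ⟨m, hm⟩ := exists_W f
  obtain ⟨P, Q, h⟩ := exists_box hq m
  rw [opE_eq_sum hq h hm, LinearMap.sum_apply, coe_sum, realizeP_one,
    tsum_eq_sum (s := P ×ˢ Q)]
  · simp only [term_apply]
  · intro s hs
    rw [← term_apply hq, term_eq_zero hq h hm hs]
    rfl

lemma LF_term {q : OpData N 1} (hq : Good q) (s : MI N × (MI N →₀ ℕ)) :
    LF xL (term hq s) :=
  (LF_mono coordDer _ _).mul_of_commute (UEpow_x _)

/-- The contribution `(-1)^{|I|} (d/dx)^I q_{I,α}` to the characteristic. -/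
noncomputable def chiCf {q : OpData N 1} (hq : Good q) (s : MI N × (MI N →₀ ℕ)) : Loc N :=
  (-1 : ℝ) ^ (∑ k, s.1 k) • mpow DE s.1 (cf hq s)

lemma Psi_term {q : OpData N 1} (hq : Good q) (s : MI N × (MI N →₀ ℕ)) (f : Loc N) :
    Psi xL DE (term hq s) f =
      chiCf hq s * UEpow s.2 f := by
  rw [term, Psi_mul_of_commute (x := xL) (U := UEpow s.2) (UEpow_x s.2),
    Psi_mono (x := xL) (D := DE) coordDer]
  rfl

lemma LF_opE {q : OpData N 1} (hq : Good q) : LF xL (opE hq) := by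
  intro f
  obtain ⟨m, hm⟩ := exists_W f
  obtain ⟨P, Q, h⟩ := exists_box hq m
  have := LF.sum (s := P ×ˢ Q) (fun s _ => LF_term hq s) f
  simpa only [adK_congr xL W_x (fun g hg => opE_eq_sum hq h hg) _ f hm] using this

lemma sign_cf {q : OpData N 1} (hq : Good q) (K : MI N) (α : MI N →₀ ℕ) (pt : JetPt N) :
    (chiCf hq (K, α)).1 pt =
      (-1 : ℝ) ^ (∑ i, K i) * DPow K (q (toIdx (K, α))) pt := by
  rw [show q (toIdx (K, α)) = (cf hq (K, α)).1 from rfl, ← coe_mpow]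
  rfl

lemma chiData_toIdx (q : OpData N 1) (α : MI N →₀ ℕ) (pt : JetPt N) :
    chiData q (toIdx (0, α)) pt =
      ∑' K : MI N, (-1 : ℝ) ^ (∑ i, K i) * DPow K (q (toIdx (K, α))) pt := by
  rw [chiData, if_pos (show (toIdx ((0 : MI N), α)).1 0 = 0 from rfl)]
  refine tsum_congr fun K => ?_
  have : Function.update (toIdx ((0 : MI N), α)).1 0 K = fun _ => K := by
    funext k
    rw [Subsingleton.elim k 0, Function.update_self]
  rw [this]
  rfl

/-- On the functions of jet order at most `m` the commutator series of a local differential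
operator is computed by a finite sum. -/
lemma Psi_opE {q : OpData N 1} (hq : Good q) {m : ℕ} {P : Finset (MI N)}
    {Q : Finset (MI N →₀ ℕ)}
    (h : ∀ s : MI N × (MI N →₀ ℕ), degf s.2 ≤ m → s ∉ P ×ˢ Q → cf hq s = 0)
    {f : Loc N} (hf : f ∈ W N m) :
    Psi xL DE (opE hq) f = ∑ s ∈ P ×ˢ Q, chiCf hq s * UEpow s.2 f := by
  rw [Psi_congr (x := xL) (W := W N m) W_x (fun g hg => opE_eq_sum hq h hg) hf,
    Psi_sum (x := xL) (A := term hq) fun s _ => LF_term hq s]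
  exact Finset.sum_congr rfl fun s _ => Psi_term hq s f

/-- The characteristic is computed by the commutator series. -/
lemma realizeP_chiData {q : OpData N 1} (hq : Good q) (f : Loc N) (pt : JetPt N) :
    realizeP (chiData q) (fun _ => f.1) pt = (Psi xL DE (opE hq) f).1 pt := by
  obtain ⟨m, hm⟩ := exists_W f
  obtain ⟨P, Q, h⟩ := exists_box hq m
  have e1 := Psi_opE hq h hm
  have hchi : ∀ α, degf α ≤ m → chiData q (toIdx (0, α)) pt =
      if α ∈ Q then ∑ K ∈ P, (chiCf hq (K, α)).1 pt else 0 := by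
    intro α hα
    have hz : ∀ K, (K, α) ∉ P ×ˢ Q →
        (-1 : ℝ) ^ (∑ i, K i) * DPow K (q (toIdx (K, α))) pt = 0 := by
      intro K hK
      rw [← sign_cf hq, chiCf, h (K, α) hα hK, map_zero, smul_zero]
      rfl
    rw [chiData_toIdx]
    split_ifs with hQ
    · rw [tsum_eq_sum (s := P) fun K hK => hz K (by simp [hK])]
      simp only [sign_cf]
    · rw [tsum_congr fun K => hz K (by simp [hQ]), tsum_zero]
  have hU : ∀ α, m < degf α → UPow α f.1 pt = 0 := by
    intro α hα
    rw [← coe_UEpow, UEpow_eq_zero hm hα]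
    rfl
  have hD0 : ∀ g : Fn N, DPow 0 g = g := by
    intro g
    have hl : ∀ l : List (Fin N), l.foldr (fun i g => (Dtot i)^[(0 : MI N) i] ∘ g) id = id := by
      intro l
      induction l with
      | nil => rfl
      | cons a l ih => rw [List.foldr_cons, ih]; rfl
    rw [DPow, hl]; rfl
  rw [e1, coe_sum, Finset.sum_product_right, realizeP_one, tsum_eq_sum (s := {0} ×ˢ Q)]
  · rw [Finset.sum_product, Finset.sum_singleton]
    refine Finset.sum_congr rfl fun α hα => ?_
    rw [hD0]
    by_cases hd : degf α ≤ m
    · rw [hchi α hd, if_pos hα, Finset.sum_mul, ← coe_UEpow]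
      rfl
    · rw [hU α (not_le.1 hd), mul_zero, Finset.sum_eq_zero]
      intro K _
      rw [UEpow_eq_zero hm (not_le.1 hd), mul_zero]
      rfl
  · rintro ⟨I, α⟩ hs
    by_cases hI : I = 0
    · subst hI
      have hα : α ∉ Q := by simpa using hs
      rw [hD0]
      by_cases hd : degf α ≤ m
      · rw [hchi α hd, if_neg hα, zero_mul]
      · rw [hU α (not_le.1 hd), mul_zero]
    · rw [chiData, if_neg (by exact hI), Pi.zero_apply, zero_mul]

/-- If `χ(A ∘ d/dx^i) = 0` then `χ(A)` commutes with `d/dx^i`. -/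
lemma Psi_comm {q : OpData N 1} (hq : Good q) (i : Fin N)
    (h : ChiZero fun f : Fin 1 → Fn N => realizeP q fun _ => Dtot i (f 0)) (f : Loc N) :
    Psi xL DE (opE hq) (DE i f) = DE i (Psi xL DE (opE hq) f) := by
  obtain ⟨q', hq', hP, hz⟩ := h
  have e : opE hq' = opE hq * DE i := by
    ext g pt
    rw [opE_apply, Module.End.mul_apply, opE_apply]
    exact (hP (fun _ => g.1) (fun _ => g.2) pt).symm
  rw [← sub_eq_zero, ← Psi_mul_D coordDer (LF_opE hq), ← e]
  ext pt
  rw [← realizeP_chiData]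
  exact hz (fun _ => f.1) (fun _ => f.2) pt

end Operators

/-- If `A` is a local differential operator (polarized data `q`) with
`χ(A ∘ d/dx^i) = 0` for all `1 ≤ i ≤ N`, then the diagonal operator
`f (dx)^ε ↦ (χ(A)f)(dx)^ε` on the horizontal complex commutes with `d_H`. -/
theorem diagonal_chi_commutes_dH {N : ℕ} (q : OpData N 1) (hq : Good q)
    (h : ∀ i : Fin N, ChiZero fun f : Fin 1 → Fn N => realizeP q fun _ => Dtot i (f 0)) :
    ∀ ω : Form N, (∀ ε, IsLocal (ω ε)) → ∀ δ pt,
      dH (fun ε => realizeP (chiData q) fun _ => ω ε) δ pt =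
        realizeP (chiData q) (fun _ => dH ω δ) pt := by
  intro ω hω δ pt
  let X : Module.End ℝ (Loc N) :=
    { toFun := Psi xL DE (opE hq)
      map_add' := Psi_add (LF_opE hq)
      map_smul' := Psi_smul (opE hq) }
  have hX : ∀ f : Loc N, realizeP (chiData q) (fun _ => f.1) = (X f).1 := fun f =>
    funext fun p => realizeP_chiData hq f p
  have hXD : ∀ i f, X (DE i f) = DE i (X f) := fun i f => Psi_comm hq i (h i) f
  let η : (Fin N → Bool) → Loc N := fun ε => ⟨ω ε, hω ε⟩
  let c : Fin N → ℝ := fun i => if δ i then (-1 : ℝ) ^ pos i δ else 0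
  have hd : ∀ θ : (Fin N → Bool) → Loc N, dH (fun ε => (θ ε).1) δ =
      (∑ i, c i • DE i (θ (Function.update δ i false))).1 := by
    intro θ
    funext p
    rw [coe_sum, dH]
    refine Finset.sum_congr rfl fun i _ => ?_
    by_cases hi : δ i
    · simp only [c, hi, if_true]
      rfl
    · simp [c, hi]
  have e1 : (fun ε => realizeP (chiData q) fun _ => ω ε) = fun ε => (X (η ε)).1 :=
    funext fun ε => hX (η ε)
  rw [e1, hd, show dH ω δ = dH (fun ε => (η ε).1) δ from rfl, hd, hX, map_sum]
  simp only [map_smul, hXD]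

end JetBundle
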